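/- Let d ≥ 1 and R ≥ 1 be natural numbers, let M, S ≥ 0 be reals, and let Λ ⊆ ℤᵈ be nonempty. For each k ∈ ℤᵈ let u_k : [0,∞) → ℝ be continuous with 0 ≤ u_k(t) ≤ S for all t ≥ 0, and suppose that for every k ∉ Λ and every t ≥ 0, u_k(t) ≤ M · ∑_{j ∈ ℤᵈ, |j−k|₁ ≤ R} ∫₀ᵗ u_j(s) ds. Then for every σ > 0 there exists τ ≥ 1 such that for all t > 0 and all k ∈ ℤᵈ, if N := ⌊dist₁(k, Λ)/R⌋ satisfies N ≥ τ·t, then u_k(t) ≤ e^{−σN − σt} · S. -/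

import Mathlib

open scoped BigOperators

/-- The ℓ¹-ball of radius `R` around `k` in `ℤᵈ`, as a `Finset`. -/
noncomputable def ball1 (d R : ℕ) (k : Fin d → ℤ) : Finset (Fin d → ℤ) :=
  (Fintype.piFinset fun i => Finset.Icc (k i - R) (k i + R)).filter
    fun j => (∑ i, |j i - k i|) ≤ (R : ℤ)

/-- The ℓ¹-distance `dist₁(k, Λ) = inf{|k − l|₁ : l ∈ Λ}` as a natural number. -/
noncomputable def dist1 (d : ℕ) (k : Fin d → ℤ) (Λ : Set (Fin d → ℤ)) : ℕ :=
  sInf {n : ℕ | ∃ l ∈ Λ, (n : ℤ) = ∑ i, |k i - l i|}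

/-!
Each use of the recursion costs one time integral and moves by at most `R` in the lattice, so from
`k` it can be used `N = ⌊dist₁(k, Λ)/R⌋` times before `Λ` is reached. With `D` a bound for the
number of points in a ball, this gives `u_k(t) ≤ S (MDt)^N / N!`. One term of the exponential
series is at most its sum, hence `(MDt)^N / N! ≤ exp(MD e^{2σ} t - 2σN)`, and half of the gain
`2σN` absorbs the terms linear in `t` as soon as `N ≥ τt` with `τ = 1 + MD e^{2σ} / σ`.
-/

open MeasureTheory
open scoped Nat

section Lattice

variable {d R : ℕ} {Λ : Set (Fin d → ℤ)}

theorem card_ball1_le (k : Fin d → ℤ) : (ball1 d R k).card ≤ (2 * R + 1) ^ d := by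
  have card_Icc (i : Fin d) : (Finset.Icc (k i - R) (k i + R)).card = 2 * R + 1 := by
    rw [Int.card_Icc]
    omega
  calc (ball1 d R k).card
      ≤ (Fintype.piFinset fun i => Finset.Icc (k i - R) (k i + R)).card :=
        Finset.card_filter_le _ _
    _ = (2 * R + 1) ^ d := by simp [card_Icc]

theorem dist1_le_sum_abs_sub (k : Fin d → ℤ) {l : Fin d → ℤ} (hl : l ∈ Λ) :
    (dist1 d k Λ : ℤ) ≤ ∑ i, |k i - l i| := by
  lift ∑ i, |k i - l i| to ℕ using Finset.sum_nonneg fun i _ => abs_nonneg _ with n hn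
  have hmem : n ∈ {n : ℕ | ∃ l ∈ Λ, (n : ℤ) = ∑ i, |k i - l i|} := ⟨l, hl, hn⟩
  exact_mod_cast Nat.sInf_le hmem

theorem exists_mem_dist1_eq (hΛ : Λ.Nonempty) (k : Fin d → ℤ) :
    ∃ l ∈ Λ, (dist1 d k Λ : ℤ) = ∑ i, |k i - l i| := by
  obtain ⟨l, hl⟩ := hΛ
  have hnonneg : 0 ≤ ∑ i, |k i - l i| := Finset.sum_nonneg fun i _ => abs_nonneg _
  exact Nat.sInf_mem (s := {n : ℕ | ∃ l ∈ Λ, (n : ℤ) = ∑ i, |k i - l i|})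
    ⟨_, l, hl, Int.toNat_of_nonneg hnonneg⟩

theorem dist1_eq_zero_of_mem {k : Fin d → ℤ} (hk : k ∈ Λ) : dist1 d k Λ = 0 := by
  simpa using dist1_le_sum_abs_sub k hk

theorem notMem_of_dist1_div_ne_zero {k : Fin d → ℤ} (hk : dist1 d k Λ / R ≠ 0) : k ∉ Λ :=
  fun hmem => hk (by rw [dist1_eq_zero_of_mem hmem, Nat.zero_div])

theorem dist1_le_dist1_add (hΛ : Λ.Nonempty) {k j : Fin d → ℤ} (hj : j ∈ ball1 d R k) :
    dist1 d k Λ ≤ dist1 d j Λ + R := by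
  obtain ⟨l, hl, hjl⟩ := exists_mem_dist1_eq hΛ j
  have hjk : ∑ i, |j i - k i| ≤ (R : ℤ) := (Finset.mem_filter.mp hj).2
  zify
  calc (dist1 d k Λ : ℤ)
      ≤ ∑ i, |k i - l i| := dist1_le_sum_abs_sub k hl
    _ ≤ ∑ i, (|k i - j i| + |j i - l i|) :=
        Finset.sum_le_sum fun i _ => abs_sub_le (k i) (j i) (l i)
    _ = ∑ i, |j i - k i| + dist1 d j Λ := by
        simp only [Finset.sum_add_distrib, abs_sub_comm (k _), hjl]
    _ ≤ dist1 d j Λ + R := by linarith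

theorem dist1_div_le_dist1_div_add_one (hR : 1 ≤ R) (hΛ : Λ.Nonempty) {k j : Fin d → ℤ}
    (hj : j ∈ ball1 d R k) : dist1 d k Λ / R ≤ dist1 d j Λ / R + 1 :=
  calc dist1 d k Λ / R
      ≤ (dist1 d j Λ + R) / R := Nat.div_le_div_right (dist1_le_dist1_add hΛ hj)
    _ = dist1 d j Λ / R + 1 := Nat.add_div_right _ hR

end Lattice

theorem mul_integral_mul_pow_div_factorial (C t : ℝ) (n : ℕ) :
    C * ∫ s in (0 : ℝ)..t, (C * s) ^ n / n ! = (C * t) ^ (n + 1) / (n + 1)! := by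
  simp only [mul_pow, intervalIntegral.integral_div, intervalIntegral.integral_const_mul,
    integral_pow, Nat.factorial_succ]
  push_cast
  field_simp
  ring

theorem pow_div_factorial_le_exp_sub {x : ℝ} (hx : 0 ≤ x) (a : ℝ) (n : ℕ) :
    x ^ n / n ! ≤ Real.exp (x * Real.exp a - a * n) :=
  calc x ^ n / n !
      = (x * Real.exp a) ^ n / n ! * Real.exp (-(a * n)) := by
        rw [mul_pow, ← Real.exp_nat_mul, mul_comm (n : ℝ) a, Real.exp_neg]
        field_simp
    _ ≤ Real.exp (x * Real.exp a) * Real.exp (-(a * n)) := by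
        gcongr
        exact Real.pow_div_factorial_le_exp _ (by positivity) n
    _ = Real.exp (x * Real.exp a - a * n) := by rw [← Real.exp_add, sub_eq_add_neg]

section Propagation

variable {ι : Type*} {u : ι → ℝ → ℝ} {M S : ℝ} {D : ℕ}

theorem mul_sum_integral_le_mul_pow_div_factorial (hM : 0 ≤ M) (hS : 0 ≤ S) {A : Finset ι}
    (hA : A.card ≤ D) {t : ℝ} (ht : 0 ≤ t) (n : ℕ)
    (hint : ∀ j ∈ A, IntervalIntegrable (u j) volume 0 t)
    (hu : ∀ j ∈ A, ∀ s ∈ Set.Icc 0 t, u j s ≤ S * ((M * D * s) ^ n / n !)) :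
    M * ∑ j ∈ A, ∫ s in (0 : ℝ)..t, u j s ≤ S * ((M * D * t) ^ (n + 1) / (n + 1)!) := by
  set I := ∫ s in (0 : ℝ)..t, (M * D * s) ^ n / n ! with hI
  have hI_nonneg : 0 ≤ I := intervalIntegral.integral_nonneg ht fun s hs => by
    have := hs.1
    positivity
  have integral_le : ∀ j ∈ A, ∫ s in (0 : ℝ)..t, u j s ≤ S * I := fun j hj => by
    rw [hI, ← intervalIntegral.integral_const_mul]
    exact intervalIntegral.integral_mono_on ht (hint j hj)
      (Continuous.intervalIntegrable (by fun_prop) _ _) (hu j hj)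
  calc M * ∑ j ∈ A, ∫ s in (0 : ℝ)..t, u j s
      ≤ M * (A.card * (S * I)) := by
        gcongr
        simpa only [nsmul_eq_mul] using Finset.sum_le_card_nsmul A _ _ integral_le
    _ ≤ M * (D * (S * I)) := by gcongr
    _ = S * (M * D * I) := by ring
    _ = S * ((M * D * t) ^ (n + 1) / (n + 1)!) := by
        rw [mul_integral_mul_pow_div_factorial]

variable {B : ι → Finset ι} {r : ι → ℕ}

theorem le_mul_pow_div_factorial_of_recursion (hM : 0 ≤ M) (hS : 0 ≤ S)
    (hB : ∀ k, (B k).card ≤ D) (hr : ∀ k, ∀ j ∈ B k, r k ≤ r j + 1)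
    (hint : ∀ k, ∀ t ≥ (0 : ℝ), IntervalIntegrable (u k) volume 0 t)
    (hbd : ∀ k, ∀ t ≥ (0 : ℝ), u k t ≤ S)
    (hrec : ∀ k, r k ≠ 0 → ∀ t ≥ (0 : ℝ), u k t ≤ M * ∑ j ∈ B k, ∫ s in (0 : ℝ)..t, u j s)
    {n : ℕ} {k : ι} (hn : n ≤ r k) {t : ℝ} (ht : 0 ≤ t) :
    u k t ≤ S * ((M * D * t) ^ n / n !) := by
  induction n generalizing k t with
  | zero => simpa using hbd k t ht
  | succ n ih =>
    have hn_nbr : ∀ j ∈ B k, n ≤ r j := fun j hj => by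
      have := hr k j hj
      omega
    exact (hrec k (by omega) t ht).trans <|
      mul_sum_integral_le_mul_pow_div_factorial hM hS (hB k) ht n (fun j _ => hint j t ht)
        fun j hj s hs => ih (hn_nbr j hj) hs.1

/-- Starting from `k` the recursion can be iterated `r k` times; on the lattice `r k` is
`⌊dist₁(k, Λ)/R⌋`. -/
theorem finite_speed_of_propagation_general (hM : 0 ≤ M) (hS : 0 ≤ S)
    (hB : ∀ k, (B k).card ≤ D) (hr : ∀ k, ∀ j ∈ B k, r k ≤ r j + 1)
    (hint : ∀ k, ∀ t ≥ (0 : ℝ), IntervalIntegrable (u k) volume 0 t)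
    (hbd : ∀ k, ∀ t ≥ (0 : ℝ), u k t ≤ S)
    (hrec : ∀ k, r k ≠ 0 → ∀ t ≥ (0 : ℝ), u k t ≤ M * ∑ j ∈ B k, ∫ s in (0 : ℝ)..t, u j s) :
    ∀ σ > (0 : ℝ), ∃ τ : ℝ, 1 ≤ τ ∧ ∀ t > (0 : ℝ), ∀ k, τ * t ≤ r k →
      u k t ≤ Real.exp (-σ * r k - σ * t) * S := by
  intro σ hσ
  set c := M * D * Real.exp (2 * σ)
  refine ⟨1 + c / σ, le_add_of_nonneg_right (by positivity), fun t ht k hτ => ?_⟩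
  have hexponent : M * D * t * Real.exp (2 * σ) - 2 * σ * r k ≤ -σ * r k - σ * t := by
    have hσ_mul : σ * t + c * t ≤ σ * r k :=
      calc σ * t + c * t = σ * ((1 + c / σ) * t) := by field_simp
        _ ≤ σ * r k := by gcongr
    linarith
  calc u k t
      ≤ S * ((M * D * t) ^ r k / (r k)!) :=
        le_mul_pow_div_factorial_of_recursion hM hS hB hr hint hbd hrec le_rfl ht.le
    _ ≤ S * Real.exp (M * D * t * Real.exp (2 * σ) - 2 * σ * r k) := by
        gcongr
        exact pow_div_factorial_le_exp_sub (by positivity) _ _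
    _ ≤ S * Real.exp (-σ * r k - σ * t) := by gcongr
    _ = Real.exp (-σ * r k - σ * t) * S := mul_comm _ _

end Propagation

/-- Finite speed of propagation of information: exponential decay of `u_k(t)`
when `N = ⌊dist₁(k,Λ)/R⌋ ≥ τ·t`. -/
theorem finite_speed_of_propagation
    (d R : ℕ) (hd : 1 ≤ d) (hR : 1 ≤ R)
    (M S : ℝ) (hM : 0 ≤ M) (hS : 0 ≤ S)
    (Λ : Set (Fin d → ℤ)) (hΛ : Λ.Nonempty)
    (u : (Fin d → ℤ) → ℝ → ℝ)
    (hcont : ∀ k, ContinuousOn (u k) (Set.Ici (0 : ℝ)))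
    (hbd : ∀ k, ∀ t ≥ (0 : ℝ), 0 ≤ u k t ∧ u k t ≤ S)
    (hrec : ∀ k ∉ Λ, ∀ t ≥ (0 : ℝ),
      u k t ≤ M * ∑ j ∈ ball1 d R k, ∫ s in (0 : ℝ)..t, u j s) :
    ∀ σ > (0 : ℝ), ∃ τ : ℝ, 1 ≤ τ ∧
      ∀ t > (0 : ℝ), ∀ k : Fin d → ℤ,
        τ * t ≤ ((dist1 d k Λ / R : ℕ) : ℝ) →
        u k t ≤ Real.exp (-σ * ((dist1 d k Λ / R : ℕ) : ℝ) - σ * t) * S := by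
  exact finite_speed_of_propagation_general hM hS card_ball1_le
    (fun _ _ => dist1_div_le_dist1_div_add_one hR hΛ)
    (fun k _ ht => ((hcont k).mono Set.Icc_subset_Ici_self).intervalIntegrable_of_Icc ht)
    (fun k t ht => (hbd k t ht).2) (fun k hk => hrec k (notMem_of_dist1_div_ne_zero hk))
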